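/- Let 𝔤 be a 6-dimensional real Lie algebra, let (ω, ψ₊) be a coupled SU(3)-structure on 𝔤 with coupled constant c, and let w₂ be a torsion form for it. If d(w₂) = k·ψ₊ for some k ∈ ℝ, then w₂∧w₂∧ω = (2/3)k·ω∧ω∧ω; equivalently, w₂∧w₂∧ω = 4k·Ω where Ω = (1/6)ω∧ω∧ω (so that, since a primitive form of type (1,1) satisfies w₂∧w₂∧ω = −|w₂|²·Ω for the h-norm of w₂, the proportionality factor is k = −(1/4)|w₂|²). -/

import Mathlib

noncomputable section

open scoped TensorProduct

/-- `Form V k` is the space of (real-valued) k-forms on `V`, i.e. alternating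
k-linear maps `V × ⋯ × V → ℝ`. -/
abbrev Form (V : Type*) [AddCommGroup V] [Module ℝ V] (k : ℕ) :=
  V [⋀^Fin k]→ₗ[ℝ] ℝ

/-- Wedge product of alternating forms (determinant/shuffle convention, so that
`(e¹ ∧ e²)(e₁, e₂) = 1`). -/
noncomputable def wedge {V : Type*} [AddCommGroup V] [Module ℝ V] {k l : ℕ}
    (f : Form V k) (g : Form V l) : Form V (k + l) :=
  ((TensorProduct.lid ℝ ℝ).toLinearMap.compAlternatingMap
    (f.domCoprod g)).domDomCongr finSumFinEquiv
/-- The Chevalley–Eilenberg differential of a 2-form, as a function of three vectors: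
`dα(x,y,z) = −α([x,y],z) + α([x,z],y) − α([y,z],x)`. -/
def d2 {𝔤 : Type*} [LieRing 𝔤] [LieAlgebra ℝ 𝔤] (α : Form 𝔤 2) (x y z : 𝔤) : ℝ :=
  -α ![⁅x, y⁆, z] + α ![⁅x, z⁆, y] - α ![⁅y, z⁆, x]

/-- The Chevalley–Eilenberg differential of a 3-form, as a function of four vectors. -/
def d3 {𝔤 : Type*} [LieRing 𝔤] [LieAlgebra ℝ 𝔤] (α : Form 𝔤 3) (x y z w : 𝔤) : ℝ :=
  -α ![⁅x, y⁆, z, w] + α ![⁅x, z⁆, y, w] - α ![⁅x, w⁆, y, z]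
    - α ![⁅y, z⁆, x, w] + α ![⁅y, w⁆, x, z] - α ![⁅z, w⁆, x, y]
/-- `λ(K) = (1/6) tr(K²)`. -/
def lamOf {V : Type*} [AddCommGroup V] [Module ℝ V] (K : V →ₗ[ℝ] V) : ℝ :=
  (1 / 6 : ℝ) * LinearMap.trace ℝ V (K ∘ₗ K)

/-- `J = −K / √(−λ(K))`. -/
def Jof {V : Type*} [AddCommGroup V] [Module ℝ V] (K : V →ₗ[ℝ] V) : V →ₗ[ℝ] V :=
  (-(Real.sqrt (-lamOf K))⁻¹) • K

/-- `K` is the endomorphism associated with the 3-form `ψ` via the volume form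
`Ω = (1/6) ω³`, i.e. `i_{K v} Ω = (i_v ψ) ∧ ψ` for all `v`. -/
def IsKOf {V : Type*} [AddCommGroup V] [Module ℝ V]
    (ω : Form V 2) (ψ : Form V 3) (K : V →ₗ[ℝ] V) : Prop :=
  ∀ v : V, ((1 / 6 : ℝ) • wedge (wedge ω ω) ω).curryLeft (K v)
    = wedge (ψ.curryLeft v) ψ

/-- An SU(3)-structure `(ω, ψp)` on `V`, with associated almost complex structure `J`
and associated 3-form `ψm` (so that `Ψ = ψp + i ψm` and `ψm(x,y,z) = −ψp(Jx,y,z)`):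
`ω³ ≠ 0`, `λ(ψp) < 0`, `ω ∧ ψp = 0`, `h(x,y) := ω(x,Jy)` is symmetric and positive
definite, and `ψp ∧ ψm = (2/3) ω³`. -/
structure IsSU3 {V : Type*} [AddCommGroup V] [Module ℝ V]
    (ω : Form V 2) (ψp ψm : Form V 3) (J : V →ₗ[ℝ] V) : Prop where
  vol_ne : wedge (wedge ω ω) ω ≠ 0
  hJ : ∃ K : V →ₗ[ℝ] V, IsKOf ω ψp K ∧ lamOf K < 0 ∧ J = Jof K
  hψm : ∀ x y z : V, ψm ![x, y, z] = -ψp ![J x, y, z]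
  compat : wedge ω ψp = 0
  h_symm : ∀ x y : V, ω ![x, J y] = ω ![y, J x]
  h_posdef : ∀ x : V, x ≠ 0 → 0 < ω ![x, J x]
  normalized : wedge ψp ψm = (2 / 3 : ℝ) • wedge (wedge ω ω) ω

/-- A coupled SU(3)-structure with coupled constant `c ≠ 0`: `dω = c ψ₊`. -/
structure IsCoupledSU3 {𝔤 : Type*} [LieRing 𝔤] [LieAlgebra ℝ 𝔤]
    (ω : Form 𝔤 2) (ψp ψm : Form 𝔤 3) (J : 𝔤 →ₗ[ℝ] 𝔤) (c : ℝ) : Prop where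
  toIsSU3 : IsSU3 ω ψp ψm J
  c_ne : c ≠ 0
  coupled : ∀ x y z : 𝔤, d2 ω x y z = c * ψp ![x, y, z]

/-- `w₂` is a torsion form for the coupled SU(3)-structure `(ω, ψp)` with coupled
constant `c`: it is primitive (`w₂ ∧ ω² = 0`), of type (1,1) (`w₂(J·,J·) = w₂`), and
`dψ₋ = −(2/3) c ω² − w₂ ∧ ω`. -/
structure IsTorsionForm {𝔤 : Type*} [LieRing 𝔤] [LieAlgebra ℝ 𝔤]
    (ω : Form 𝔤 2) (ψp ψm : Form 𝔤 3) (J : 𝔤 →ₗ[ℝ] 𝔤) (c : ℝ) (w₂ : Form 𝔤 2) : Prop where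
  primitive : wedge (wedge w₂ ω) ω = 0
  type11 : ∀ x y : 𝔤, w₂ ![J x, J y] = w₂ ![x, y]
  dψm : ∀ x y z w : 𝔤, d3 ψm x y z w
    = -(2 / 3 : ℝ) * c * wedge ω ω ![x, y, z, w] - wedge w₂ ω ![x, y, z, w]

/-- The permutation with given values and given inverse. -/
def permOf {n : ℕ} (F G : Fin n → Fin n) (h1 : ∀ x, G (F x) = x) (h2 : ∀ x, F (G x) = x) :
    Equiv.Perm (Fin n) := ⟨F, G, h1, h2⟩

theorem vec_eta2 {V : Type*} (v : Fin 2 → V) : v = ![v 0, v 1] := by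
  ext i; fin_cases i <;> rfl

theorem vec_eta3 {V : Type*} (v : Fin 3 → V) : v = ![v 0, v 1, v 2] := by
  ext i; fin_cases i <;> rfl

theorem vec_eta4 {V : Type*} (v : Fin 4 → V) : v = ![v 0, v 1, v 2, v 3] := by
  ext i; fin_cases i <;> rfl

/-- Evaluation of a wedge product through an explicit system of representatives. -/
theorem wedge_eq {V : Type*} [AddCommGroup V] [Module ℝ V] {k l m : ℕ}
    (F G : Fin m → Fin (k + l) → Fin (k + l))
    (h1 : ∀ i x, G i (F i x) = x) (h2 : ∀ i x, F i (G i x) = x)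
    (s : Fin m → ℤ) (hs : ∀ i, ((Equiv.Perm.sign (permOf (F i) (G i) (h1 i) (h2 i)) : ℤˣ) : ℤ) = s i)
    (hinj : ∀ i j, i ≠ j → ∃ a : Fin k, k ≤ (G i (F j (Fin.castAdd l a))).val)
    (hcard : m * (k.factorial * l.factorial) = (k + l).factorial)
    (f : Form V k) (g : Form V l) (v : Fin (k + l) → V) :
    wedge f g v = ∑ i, (s i : ℝ) * (f (fun a => v (F i (Fin.castAdd l a))) *
      g (fun b => v (F i (Fin.natAdd k b)))) := by
  classical
  let P : Fin m → Equiv.Perm (Fin k ⊕ Fin l) := fun i =>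
    finSumFinEquiv.symm.permCongr (permOf (F i) (G i) (h1 i) (h2 i))
  let q : Fin m → Equiv.Perm.ModSumCongr (Fin k) (Fin l) := fun i => Quotient.mk'' (P i)
  have hqinj : Function.Injective q := by
    intro i j hij
    by_contra hne
    have h := QuotientGroup.leftRel_apply.mp (Quotient.exact' hij)
    obtain ⟨a, ha⟩ := hinj i j hne
    obtain ⟨⟨sl, sr⟩, h⟩ := h
    have h' := congrArg (fun e : Equiv.Perm (Fin k ⊕ Fin l) => finSumFinEquiv (e (Sum.inl a))) h
    have h3 : G i (F j (Fin.castAdd l a)) = Fin.castAdd l (sl a) := by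
      have e1 : finSumFinEquiv (((P i)⁻¹ * P j) (Sum.inl a)) = G i (F j (Fin.castAdd l a)) := by
        simp only [P, Equiv.Perm.mul_apply, Equiv.permCongr_apply, Equiv.symm_symm,
          finSumFinEquiv_apply_left]
        rw [Equiv.Perm.inv_def]
        simp [Equiv.permCongr, permOf, Equiv.equivCongr]
      rw [← e1, ← h']
      simp
    rw [h3] at ha
    have := (sl a).isLt
    simp at ha
    omega
  have hc : Fintype.card (Fin m) = Fintype.card (Equiv.Perm.ModSumCongr (Fin k) (Fin l)) := by
    have h := Subgroup.card_eq_card_quotient_mul_card_subgroup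
      (Equiv.Perm.sumCongrHom (Fin k) (Fin l)).range
    simp only [Nat.card_eq_fintype_card] at h
    rw [Equiv.Perm.sumCongrHom.card_range] at h
    simp [Fintype.card_perm] at h
    rw [← hcard] at h
    simp only [Fintype.card_fin]
    have hp : 0 < k.factorial * l.factorial := by positivity
    exact Nat.eq_of_mul_eq_mul_right hp (by convert h)
  have hq : Function.Bijective q := (Fintype.bijective_iff_injective_and_card q).2 ⟨hqinj, hc⟩
  have : wedge f g v = ∑ σ : Equiv.Perm.ModSumCongr (Fin k) (Fin l),
      TensorProduct.lid ℝ ℝ (AlternatingMap.domCoprod.summand f g σ (fun a => v (finSumFinEquiv a))) := by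
    simp only [wedge, AlternatingMap.domDomCongr_apply, LinearMap.compAlternatingMap_apply,
      AlternatingMap.domCoprod_apply, _root_.sum_apply, map_sum]
    rfl
  rw [this, ← Function.Bijective.sum_comp hq]
  refine Finset.sum_congr rfl fun i _ => ?_
  simp only [q]
  rw [AlternatingMap.domCoprod.summand_mk'']
  have hsg : Equiv.Perm.sign (P i) = Equiv.Perm.sign (permOf (F i) (G i) (h1 i) (h2 i)) := by
    simp [P]
  rw [hsg, ← hs i]
  rcases Int.units_eq_one_or (Equiv.Perm.sign (permOf (F i) (G i) (h1 i) (h2 i))) with h | h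
  · rw [h, one_smul]
    simp [P, permOf, MultilinearMap.domCoprod_apply]
  · rw [h, Units.neg_smul, one_smul, _root_.neg_apply]
    simp [P, permOf, MultilinearMap.domCoprod_apply]

/-- The (2,2)-shuffles. -/
def sh22 : Fin 6 → Fin (2 + 2) → Fin (2 + 2) := ![
    ![0, 1, 2, 3], ![0, 2, 1, 3], ![0, 3, 1, 2], ![1, 2, 0, 3],
    ![1, 3, 0, 2], ![2, 3, 0, 1]]

/-- The inverses of the (2,2)-shuffles. -/
def shInv22 : Fin 6 → Fin (2 + 2) → Fin (2 + 2) := ![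
    ![0, 1, 2, 3], ![0, 2, 1, 3], ![0, 2, 3, 1], ![2, 0, 1, 3],
    ![2, 0, 3, 1], ![2, 3, 0, 1]]

theorem wedge22 {V : Type*} [AddCommGroup V] [Module ℝ V] (f : Form V 2) (g : Form V 2)
    (x0 x1 x2 x3 : V) :
    wedge f g ![x0, x1, x2, x3] =
      f ![x0, x1] * g ![x2, x3]
      - f ![x0, x2] * g ![x1, x3]
      + f ![x0, x3] * g ![x1, x2]
      + f ![x1, x2] * g ![x0, x3]
      - f ![x1, x3] * g ![x0, x2]
      + f ![x2, x3] * g ![x0, x1] := by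
  rw [wedge_eq sh22 shInv22 (by decide +kernel) (by decide +kernel)
    ![1, -1, 1, 1, -1, 1] (by decide +kernel) (by decide +kernel)
    (by decide +kernel)]
  have e1 : ∀ i, (fun a : Fin 2 => ![x0, x1, x2, x3] (sh22 i (Fin.castAdd 2 a))) = _ :=
    fun i => vec_eta2 _
  have e2 : ∀ i, (fun b : Fin 2 => ![x0, x1, x2, x3] (sh22 i (Fin.natAdd 2 b))) = _ :=
    fun i => vec_eta2 _
  simp only [e1, e2]
  simp [Fin.sum_univ_succ, sh22]
  try ring!

/-- The (2,3)-shuffles. -/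
def sh23 : Fin 10 → Fin (2 + 3) → Fin (2 + 3) := ![
    ![0, 1, 2, 3, 4], ![0, 2, 1, 3, 4], ![0, 3, 1, 2, 4], ![0, 4, 1, 2, 3],
    ![1, 2, 0, 3, 4], ![1, 3, 0, 2, 4], ![1, 4, 0, 2, 3], ![2, 3, 0, 1, 4],
    ![2, 4, 0, 1, 3], ![3, 4, 0, 1, 2]]

/-- The inverses of the (2,3)-shuffles. -/
def shInv23 : Fin 10 → Fin (2 + 3) → Fin (2 + 3) := ![
    ![0, 1, 2, 3, 4], ![0, 2, 1, 3, 4], ![0, 2, 3, 1, 4], ![0, 2, 3, 4, 1],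
    ![2, 0, 1, 3, 4], ![2, 0, 3, 1, 4], ![2, 0, 3, 4, 1], ![2, 3, 0, 1, 4],
    ![2, 3, 0, 4, 1], ![2, 3, 4, 0, 1]]

theorem wedge23 {V : Type*} [AddCommGroup V] [Module ℝ V] (f : Form V 2) (g : Form V 3)
    (x0 x1 x2 x3 x4 : V) :
    wedge f g ![x0, x1, x2, x3, x4] =
      f ![x0, x1] * g ![x2, x3, x4]
      - f ![x0, x2] * g ![x1, x3, x4]
      + f ![x0, x3] * g ![x1, x2, x4]
      - f ![x0, x4] * g ![x1, x2, x3]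
      + f ![x1, x2] * g ![x0, x3, x4]
      - f ![x1, x3] * g ![x0, x2, x4]
      + f ![x1, x4] * g ![x0, x2, x3]
      + f ![x2, x3] * g ![x0, x1, x4]
      - f ![x2, x4] * g ![x0, x1, x3]
      + f ![x3, x4] * g ![x0, x1, x2] := by
  rw [wedge_eq sh23 shInv23 (by decide +kernel) (by decide +kernel)
    ![1, -1, 1, -1, 1, -1, 1, 1, -1, 1] (by decide +kernel) (by decide +kernel)
    (by decide +kernel)]
  have e1 : ∀ i, (fun a : Fin 2 => ![x0, x1, x2, x3, x4] (sh23 i (Fin.castAdd 3 a))) = _ :=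
    fun i => vec_eta2 _
  have e2 : ∀ i, (fun b : Fin 3 => ![x0, x1, x2, x3, x4] (sh23 i (Fin.natAdd 2 b))) = _ :=
    fun i => vec_eta3 _
  simp only [e1, e2]
  simp [Fin.sum_univ_succ, sh23]
  try ring!

/-- The (4,2)-shuffles. -/
def sh42 : Fin 15 → Fin (4 + 2) → Fin (4 + 2) := ![
    ![0, 1, 2, 3, 4, 5], ![0, 1, 2, 4, 3, 5], ![0, 1, 2, 5, 3, 4], ![0, 1, 3, 4, 2, 5],
    ![0, 1, 3, 5, 2, 4], ![0, 1, 4, 5, 2, 3], ![0, 2, 3, 4, 1, 5], ![0, 2, 3, 5, 1, 4],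
    ![0, 2, 4, 5, 1, 3], ![0, 3, 4, 5, 1, 2], ![1, 2, 3, 4, 0, 5], ![1, 2, 3, 5, 0, 4],
    ![1, 2, 4, 5, 0, 3], ![1, 3, 4, 5, 0, 2], ![2, 3, 4, 5, 0, 1]]

/-- The inverses of the (4,2)-shuffles. -/
def shInv42 : Fin 15 → Fin (4 + 2) → Fin (4 + 2) := ![
    ![0, 1, 2, 3, 4, 5], ![0, 1, 2, 4, 3, 5], ![0, 1, 2, 4, 5, 3], ![0, 1, 4, 2, 3, 5],
    ![0, 1, 4, 2, 5, 3], ![0, 1, 4, 5, 2, 3], ![0, 4, 1, 2, 3, 5], ![0, 4, 1, 2, 5, 3],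
    ![0, 4, 1, 5, 2, 3], ![0, 4, 5, 1, 2, 3], ![4, 0, 1, 2, 3, 5], ![4, 0, 1, 2, 5, 3],
    ![4, 0, 1, 5, 2, 3], ![4, 0, 5, 1, 2, 3], ![4, 5, 0, 1, 2, 3]]

theorem wedge42 {V : Type*} [AddCommGroup V] [Module ℝ V] (f : Form V 4) (g : Form V 2)
    (x0 x1 x2 x3 x4 x5 : V) :
    wedge f g ![x0, x1, x2, x3, x4, x5] =
      f ![x0, x1, x2, x3] * g ![x4, x5]
      - f ![x0, x1, x2, x4] * g ![x3, x5]
      + f ![x0, x1, x2, x5] * g ![x3, x4]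
      + f ![x0, x1, x3, x4] * g ![x2, x5]
      - f ![x0, x1, x3, x5] * g ![x2, x4]
      + f ![x0, x1, x4, x5] * g ![x2, x3]
      - f ![x0, x2, x3, x4] * g ![x1, x5]
      + f ![x0, x2, x3, x5] * g ![x1, x4]
      - f ![x0, x2, x4, x5] * g ![x1, x3]
      + f ![x0, x3, x4, x5] * g ![x1, x2]
      + f ![x1, x2, x3, x4] * g ![x0, x5]
      - f ![x1, x2, x3, x5] * g ![x0, x4]
      + f ![x1, x2, x4, x5] * g ![x0, x3]
      - f ![x1, x3, x4, x5] * g ![x0, x2]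
      + f ![x2, x3, x4, x5] * g ![x0, x1] := by
  rw [wedge_eq sh42 shInv42 (by decide +kernel) (by decide +kernel)
    ![1, -1, 1, 1, -1, 1, -1, 1, -1, 1, 1, -1, 1, -1, 1] (by decide +kernel) (by decide +kernel)
    (by decide +kernel)]
  have e1 : ∀ i, (fun a : Fin 4 => ![x0, x1, x2, x3, x4, x5] (sh42 i (Fin.castAdd 2 a))) = _ :=
    fun i => vec_eta4 _
  have e2 : ∀ i, (fun b : Fin 2 => ![x0, x1, x2, x3, x4, x5] (sh42 i (Fin.natAdd 4 b))) = _ :=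
    fun i => vec_eta2 _
  simp only [e1, e2]
  simp [Fin.sum_univ_succ, sh42]
  try ring!

/-- The (3,3)-shuffles. -/
def sh33 : Fin 20 → Fin (3 + 3) → Fin (3 + 3) := ![
    ![0, 1, 2, 3, 4, 5], ![0, 1, 3, 2, 4, 5], ![0, 1, 4, 2, 3, 5], ![0, 1, 5, 2, 3, 4],
    ![0, 2, 3, 1, 4, 5], ![0, 2, 4, 1, 3, 5], ![0, 2, 5, 1, 3, 4], ![0, 3, 4, 1, 2, 5],
    ![0, 3, 5, 1, 2, 4], ![0, 4, 5, 1, 2, 3], ![1, 2, 3, 0, 4, 5], ![1, 2, 4, 0, 3, 5],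
    ![1, 2, 5, 0, 3, 4], ![1, 3, 4, 0, 2, 5], ![1, 3, 5, 0, 2, 4], ![1, 4, 5, 0, 2, 3],
    ![2, 3, 4, 0, 1, 5], ![2, 3, 5, 0, 1, 4], ![2, 4, 5, 0, 1, 3], ![3, 4, 5, 0, 1, 2]]

/-- The inverses of the (3,3)-shuffles. -/
def shInv33 : Fin 20 → Fin (3 + 3) → Fin (3 + 3) := ![
    ![0, 1, 2, 3, 4, 5], ![0, 1, 3, 2, 4, 5], ![0, 1, 3, 4, 2, 5], ![0, 1, 3, 4, 5, 2],
    ![0, 3, 1, 2, 4, 5], ![0, 3, 1, 4, 2, 5], ![0, 3, 1, 4, 5, 2], ![0, 3, 4, 1, 2, 5],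
    ![0, 3, 4, 1, 5, 2], ![0, 3, 4, 5, 1, 2], ![3, 0, 1, 2, 4, 5], ![3, 0, 1, 4, 2, 5],
    ![3, 0, 1, 4, 5, 2], ![3, 0, 4, 1, 2, 5], ![3, 0, 4, 1, 5, 2], ![3, 0, 4, 5, 1, 2],
    ![3, 4, 0, 1, 2, 5], ![3, 4, 0, 1, 5, 2], ![3, 4, 0, 5, 1, 2], ![3, 4, 5, 0, 1, 2]]

theorem wedge33 {V : Type*} [AddCommGroup V] [Module ℝ V] (f : Form V 3) (g : Form V 3)
    (x0 x1 x2 x3 x4 x5 : V) :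
    wedge f g ![x0, x1, x2, x3, x4, x5] =
      f ![x0, x1, x2] * g ![x3, x4, x5]
      - f ![x0, x1, x3] * g ![x2, x4, x5]
      + f ![x0, x1, x4] * g ![x2, x3, x5]
      - f ![x0, x1, x5] * g ![x2, x3, x4]
      + f ![x0, x2, x3] * g ![x1, x4, x5]
      - f ![x0, x2, x4] * g ![x1, x3, x5]
      + f ![x0, x2, x5] * g ![x1, x3, x4]
      + f ![x0, x3, x4] * g ![x1, x2, x5]
      - f ![x0, x3, x5] * g ![x1, x2, x4]
      + f ![x0, x4, x5] * g ![x1, x2, x3]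
      - f ![x1, x2, x3] * g ![x0, x4, x5]
      + f ![x1, x2, x4] * g ![x0, x3, x5]
      - f ![x1, x2, x5] * g ![x0, x3, x4]
      - f ![x1, x3, x4] * g ![x0, x2, x5]
      + f ![x1, x3, x5] * g ![x0, x2, x4]
      - f ![x1, x4, x5] * g ![x0, x2, x3]
      + f ![x2, x3, x4] * g ![x0, x1, x5]
      - f ![x2, x3, x5] * g ![x0, x1, x4]
      + f ![x2, x4, x5] * g ![x0, x1, x3]
      - f ![x3, x4, x5] * g ![x0, x1, x2] := by
  rw [wedge_eq sh33 shInv33 (by decide +kernel) (by decide +kernel)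
    ![1, -1, 1, -1, 1, -1, 1, 1, -1, 1, -1, 1, -1, -1, 1, -1, 1, -1, 1, -1] (by decide +kernel) (by decide +kernel)
    (by decide +kernel)]
  have e1 : ∀ i, (fun a : Fin 3 => ![x0, x1, x2, x3, x4, x5] (sh33 i (Fin.castAdd 3 a))) = _ :=
    fun i => vec_eta3 _
  have e2 : ∀ i, (fun b : Fin 3 => ![x0, x1, x2, x3, x4, x5] (sh33 i (Fin.natAdd 3 b))) = _ :=
    fun i => vec_eta3 _
  simp only [e1, e2]
  simp [Fin.sum_univ_succ, sh33]
  try ring!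

theorem form_update {V : Type*} [AddCommGroup V] [Module ℝ V] (b : Module.Basis (Fin 6) ℝ V)
    (Ω : Form V 6) (i : Fin 6) (x : V) :
    Ω (Function.update b i x) = b.repr x i * Ω b := by
  conv_lhs => rw [← b.sum_repr x]
  rw [AlternatingMap.map_update_sum, Finset.sum_eq_single i]
  · rw [AlternatingMap.map_update_smul]
    simp
  · intro j _ hj
    rw [AlternatingMap.map_update_smul, AlternatingMap.map_update_self _ _ hj.symm]
    simp
  · simp

theorem form_coord {V : Type*} [AddCommGroup V] [Module ℝ V] (b : Module.Basis (Fin 6) ℝ V)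
    (Ω : Form V 6) (i : Fin 6) (x : V) :
    (-1 : ℝ) ^ (i : ℕ) * Ω.curryLeft x (i.removeNth b) = b.repr x i * Ω b := by
  rw [← form_update, ← Fin.insertNth_removeNth, AlternatingMap.map_insertNth]
  simp

theorem coord_eq {V : Type*} [AddCommGroup V] [Module ℝ V] (b : Module.Basis (Fin 6) ℝ V)
    (Ω : Form V 6) (ψ : Form V 3) (K : V →ₗ[ℝ] V)
    (hK : ∀ v : V, Ω.curryLeft (K v) = wedge (ψ.curryLeft v) ψ) (i : Fin 6) (x : V) :
    b.repr (K x) i * Ω b = (-1 : ℝ) ^ (i : ℕ) * wedge (ψ.curryLeft x) ψ (i.removeNth b) := by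
  rw [← form_coord, hK]

theorem swap01 {V : Type*} [AddCommGroup V] [Module ℝ V] (ψ : Form V 3) (x y z : V) :
    ψ ![y, x, z] = -ψ ![x, y, z] := by
  have h := ψ.map_swap ![x, y, z] (i := 0) (j := 1) (by decide)
  rw [← h]; congr 1; ext i; fin_cases i <;> rfl

theorem swap12 {V : Type*} [AddCommGroup V] [Module ℝ V] (ψ : Form V 3) (x y z : V) :
    ψ ![x, z, y] = -ψ ![x, y, z] := by
  have h := ψ.map_swap ![x, y, z] (i := 1) (j := 2) (by decide)
  rw [← h]; congr 1; ext i; fin_cases i <;> rfl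

theorem zero01 {V : Type*} [AddCommGroup V] [Module ℝ V] (ψ : Form V 3) (x z : V) :
    ψ ![x, x, z] = 0 := ψ.map_eq_zero_of_eq _ (i := 0) (j := 1) rfl (by decide)

theorem zero12 {V : Type*} [AddCommGroup V] [Module ℝ V] (ψ : Form V 3) (x z : V) :
    ψ ![z, x, x] = 0 := ψ.map_eq_zero_of_eq _ (i := 1) (j := 2) rfl (by decide)

theorem zero02 {V : Type*} [AddCommGroup V] [Module ℝ V] (ψ : Form V 3) (x z : V) :
    ψ ![x, z, x] = 0 := ψ.map_eq_zero_of_eq _ (i := 0) (j := 2) rfl (by decide)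

theorem curry3 {V : Type*} [AddCommGroup V] [Module ℝ V] (ψ : Form V 3) (x y z : V) :
    ψ.curryLeft x ![y, z] = ψ ![x, y, z] := rfl

theorem removeNth_basis {V : Type*} (b : Fin 6 → V) :
    Fin.removeNth 0 b = ![b 1, b 2, b 3, b 4, b 5] ∧
    Fin.removeNth 1 b = ![b 0, b 2, b 3, b 4, b 5] ∧
    Fin.removeNth 2 b = ![b 0, b 1, b 3, b 4, b 5] ∧
    Fin.removeNth 3 b = ![b 0, b 1, b 2, b 4, b 5] ∧
    Fin.removeNth 4 b = ![b 0, b 1, b 2, b 3, b 5] ∧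
    Fin.removeNth 5 b = ![b 0, b 1, b 2, b 3, b 4] := by
  refine ⟨?_, ?_, ?_, ?_, ?_, ?_⟩ <;> (ext i; fin_cases i <;> rfl)

theorem neg_one_pows : (-1 : ℝ) ^ ((0 : Fin 6) : ℕ) = 1 ∧ (-1 : ℝ) ^ ((1 : Fin 6) : ℕ) = -1 ∧
    (-1 : ℝ) ^ ((2 : Fin 6) : ℕ) = 1 ∧ (-1 : ℝ) ^ ((3 : Fin 6) : ℕ) = -1 ∧
    (-1 : ℝ) ^ ((4 : Fin 6) : ℕ) = 1 ∧ (-1 : ℝ) ^ ((5 : Fin 6) : ℕ) = -1 := by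
  refine ⟨?_, ?_, ?_, ?_, ?_, ?_⟩
  · exact pow_zero _
  · exact pow_one _
  · exact Even.neg_one_pow (by decide)
  · exact Odd.neg_one_pow (by decide)
  · exact Even.neg_one_pow (by decide)
  · exact Odd.neg_one_pow (by decide)

theorem sort01 {V : Type*} [AddCommGroup V] [Module ℝ V] (ψ : Form V 3) (b : Fin 6 → V)
    (i j k : Fin 6) (_h : j < i) : ψ ![b i, b j, b k] = -ψ ![b j, b i, b k] := swap01 _ _ _ _

theorem sort12 {V : Type*} [AddCommGroup V] [Module ℝ V] (ψ : Form V 3) (b : Fin 6 → V)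
    (i j k : Fin 6) (_h : k < j) : ψ ![b i, b j, b k] = -ψ ![b i, b k, b j] := swap12 _ _ _ _

/-- The coordinates of `K² x`. -/
theorem coord_sq {V : Type*} [AddCommGroup V] [Module ℝ V] (b : Module.Basis (Fin 6) ℝ V)
    (K : V →ₗ[ℝ] V) (o : ℝ) (x : V) (j : Fin 6) :
    b.repr (K (K x)) j * o * o =
      ∑ i, (b.repr (K x) i * o) * (b.repr (K (b i)) j * o) := by
  conv_lhs => rw [← b.sum_repr (K x)]
  simp only [map_sum, map_smul, Finsupp.coe_finsetSum, Finset.sum_apply, Finsupp.smul_apply,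
    smul_eq_mul, Finset.sum_mul]
  exact Finset.sum_congr rfl fun i _ => by ring

set_option maxHeartbeats 4000000 in
set_option maxRecDepth 20000 in
theorem sq_offdiag {V : Type*} [AddCommGroup V] [Module ℝ V] (b : Module.Basis (Fin 6) ℝ V)
    (Ω : Form V 6) (hΩ : Ω b ≠ 0) (ψ : Form V 3) (K : V →ₗ[ℝ] V)
    (hK : ∀ v : V, Ω.curryLeft (K v) = wedge (ψ.curryLeft v) ψ) :
    b.repr (K (K (b 0))) 1 = 0 := by
  have h := coord_sq b K (Ω b) (b 0) 1
  generalize b.repr (K (K (b 0))) 1 = t at h ⊢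
  simp only [coord_eq b Ω ψ K hK] at h
  obtain ⟨r0, r1, r2, r3, r4, r5⟩ := removeNth_basis b
  obtain ⟨s0, s1, s2, s3, s4, s5⟩ := neg_one_pows
  simp only [Fin.sum_univ_six, s0, s1, s2, s3, s4, s5, r0, r1, r2, r3, r4, r5, wedge23, curry3] at h
  simp (discharger := decide) only [zero01, zero02, sort01, sort12] at h
  have h2 : t * Ω b * Ω b = 0 := by
    rw [h]; ring
  simpa [hΩ] using h2

set_option maxHeartbeats 4000000 in
set_option maxRecDepth 20000 in
theorem sq_diag {V : Type*} [AddCommGroup V] [Module ℝ V] (b : Module.Basis (Fin 6) ℝ V)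
    (Ω : Form V 6) (hΩ : Ω b ≠ 0) (ψ : Form V 3) (K : V →ₗ[ℝ] V)
    (hK : ∀ v : V, Ω.curryLeft (K v) = wedge (ψ.curryLeft v) ψ) :
    b.repr (K (K (b 0))) 0 = b.repr (K (K (b 1))) 1 := by
  have h := coord_sq b K (Ω b) (b 0) 0
  have h' := coord_sq b K (Ω b) (b 1) 1
  generalize b.repr (K (K (b 0))) 0 = t at h ⊢
  generalize b.repr (K (K (b 1))) 1 = t' at h' ⊢
  simp only [coord_eq b Ω ψ K hK] at h h'
  obtain ⟨r0, r1, r2, r3, r4, r5⟩ := removeNth_basis b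
  obtain ⟨s0, s1, s2, s3, s4, s5⟩ := neg_one_pows
  simp only [Fin.sum_univ_six, s0, s1, s2, s3, s4, s5, r0, r1, r2, r3, r4, r5, wedge23, curry3] at h h'
  simp (discharger := decide) only [zero01, zero02, sort01, sort12] at h h'
  have h2 : t * Ω b * Ω b = t' * Ω b * Ω b := by
    rw [h, h']; ring
  exact mul_right_cancel₀ hΩ (mul_right_cancel₀ hΩ h2)

theorem exists_perm01 (i j : Fin 6) (h : i ≠ j) : ∃ σ : Equiv.Perm (Fin 6), σ 0 = i ∧ σ 1 = j := by
  refine ⟨Equiv.swap 0 i * Equiv.swap 1 (Equiv.swap 0 i j), ?_, ?_⟩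
  · have h1 : (0 : Fin 6) ≠ Equiv.swap 0 i j := by
      intro h0
      have h2 := congrArg (Equiv.swap 0 i) h0
      simp at h2
      exact h h2
    rw [Equiv.Perm.mul_apply, Equiv.swap_apply_of_ne_of_ne (by decide) h1, Equiv.swap_apply_left]
  · simp

/-- `K²` is a multiple of the identity (Hitchin). -/
theorem sq_scalar {V : Type*} [AddCommGroup V] [Module ℝ V] (b : Module.Basis (Fin 6) ℝ V)
    (Ω : Form V 6) (hΩ : Ω ≠ 0) (ψ : Form V 3) (K : V →ₗ[ℝ] V)
    (hK : ∀ v : V, Ω.curryLeft (K v) = wedge (ψ.curryLeft v) ψ) :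
    ∃ μ : ℝ, ∀ x, K (K x) = μ • x := by
  have hb : ∀ c : Module.Basis (Fin 6) ℝ V, Ω c ≠ 0 := fun c h =>
    hΩ ((AlternatingMap.map_basis_eq_zero_iff c Ω).1 h)
  have key : ∀ i j, i ≠ j → b.repr (K (K (b i))) j = 0 ∧
      b.repr (K (K (b i))) i = b.repr (K (K (b j))) j := by
    intro i j hij
    obtain ⟨σ, h0, h1⟩ := exists_perm01 i j hij
    have e1 := sq_offdiag (b.reindex σ.symm) Ω (hb _) ψ K hK
    have e2 := sq_diag (b.reindex σ.symm) Ω (hb _) ψ K hK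
    simp only [Module.Basis.reindex_apply, Module.Basis.repr_reindex_apply, Equiv.symm_symm,
      h0, h1] at e1 e2
    exact ⟨e1, e2⟩
  refine ⟨b.repr (K (K (b 0))) 0, ?_⟩
  have : K ∘ₗ K = (b.repr (K (K (b 0))) 0) • LinearMap.id := by
    refine b.ext fun i => b.ext_elem fun j => ?_
    simp only [LinearMap.comp_apply, LinearMap.smul_apply, LinearMap.id_apply, map_smul,
      Finsupp.smul_apply, smul_eq_mul, Module.Basis.repr_self]
    by_cases hij : i = j
    · subst hij
      rw [Finsupp.single_eq_same, mul_one]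
      by_cases hi : i = 0
      · rw [hi]
      · exact (key i 0 hi).2
    · rw [(key i j hij).1, Finsupp.single_eq_of_ne (Ne.symm hij), mul_zero]
  intro x
  exact LinearMap.congr_fun this x

set_option maxRecDepth 20000 in
theorem J_sq {V : Type*} [AddCommGroup V] [Module ℝ V] [FiniteDimensional ℝ V]
    (hdim : Module.finrank ℝ V = 6) (ω : Form V 2) (ψ : Form V 3) (J : V →ₗ[ℝ] V)
    (hv : wedge (wedge ω ω) ω ≠ 0)
    (hJ : ∃ K : V →ₗ[ℝ] V, IsKOf ω ψ K ∧ lamOf K < 0 ∧ J = Jof K) (x : V) :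
    J (J x) = -x := by
  obtain ⟨K, hK, hl, rfl⟩ := hJ
  let b : Module.Basis (Fin 6) ℝ V := Module.finBasisOfFinrankEq ℝ V hdim
  have h6 : (1 / 6 : ℝ) ≠ 0 := by norm_num
  have hne : (1 / 6 : ℝ) • wedge (wedge ω ω) ω ≠ 0 := smul_ne_zero h6 hv
  obtain ⟨μ, hμ⟩ := sq_scalar b ((1 / 6 : ℝ) • wedge (wedge ω ω) ω) hne ψ K hK
  have h1 : K ∘ₗ K = μ • LinearMap.id := LinearMap.ext hμ
  have h2 : lamOf K = μ := by
    rw [lamOf, h1, map_smul, LinearMap.trace_id, hdim]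
    simp only [smul_eq_mul]; push_cast; ring
  have h3 : Real.sqrt (-lamOf K) * Real.sqrt (-lamOf K) = -lamOf K :=
    Real.mul_self_sqrt (by linarith)
  simp only [Jof, LinearMap.smul_apply, map_smul, hμ, smul_smul]
  rw [← h2]
  have h4 : -(Real.sqrt (-lamOf K))⁻¹ * (-(Real.sqrt (-lamOf K))⁻¹ * lamOf K) = -1 := by
    have : (Real.sqrt (-lamOf K))⁻¹ * (Real.sqrt (-lamOf K))⁻¹ = (-lamOf K)⁻¹ := by
      rw [← mul_inv, h3]
    rw [neg_mul, neg_mul, mul_neg, neg_neg, ← mul_assoc, this, inv_neg, neg_mul,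
      inv_mul_cancel₀ hl.ne]
  rw [h4, neg_one_smul]

/-- A basis adapted to a complex structure. -/
theorem exists_adapted {V : Type*} [AddCommGroup V] [Module ℝ V] [FiniteDimensional ℝ V]
    (hdim : Module.finrank ℝ V = 6) (J : V →ₗ[ℝ] V) (hJ : ∀ x, J (J x) = -x) :
    ∃ (e : Module.Basis (Fin 6) ℝ V) (x y z : V), ⇑e = ![x, J x, y, J y, z, J z] := by
  have hJJ : (J * J : Module.End ℝ V) = -1 := LinearMap.ext hJ
  let φ : ℂ →ₐ[ℝ] Module.End ℝ V := Complex.liftAux J hJJ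
  letI : Module ℂ V := Module.compHom V φ.toRingHom
  have hsm : ∀ (z : ℂ) (v : V), z • v = φ z v := fun _ _ => rfl
  haveI : IsScalarTower ℝ ℂ V := ⟨fun r z v => by
    rw [hsm, hsm, map_smul]; rfl⟩
  haveI : Module.Finite ℂ V := Module.Finite.of_restrictScalars_finite ℝ ℂ V
  have hf : Module.finrank ℂ V = 3 := by
    have := Module.finrank_mul_finrank ℝ ℂ V
    rw [hdim, Complex.finrank_real_complex] at this
    omega
  let c : Module.Basis (Fin 3) ℂ V := Module.finBasisOfFinrankEq ℂ V hf
  let B := Complex.basisOneI.smulTower' c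
  refine ⟨B.reindex finProdFinEquiv, c 0, c 1, c 2, ?_⟩
  have h0 : ∀ i, B (i, 0) = c i := fun i => by
    simp [B, Module.Basis.smulTower'_apply]
  have h1 : ∀ i, B (i, 1) = J (c i) := fun i => by
    simp only [B, Module.Basis.smulTower'_apply, Complex.coe_basisOneI]
    change Complex.I • c i = _
    rw [hsm]
    simp [φ]
  ext i
  rw [Module.Basis.reindex_apply]
  fin_cases i
  · exact h0 0
  · exact h1 0
  · exact h0 1
  · exact h1 1
  · exact h0 2
  · exact h1 2

/-- A 5-form in dimension 6 vanishes if it vanishes on the five-element subsets of a basis. -/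
theorem form5_zero {V : Type*} [AddCommGroup V] [Module ℝ V] (e : Module.Basis (Fin 6) ℝ V)
    (A : Form V 5) (h : ∀ i : Fin 6, A (i.removeNth e) = 0) : A = 0 := by
  refine Module.Basis.ext_alternating e fun v hv => ?_
  have hns : ¬ Function.Surjective v := fun hs => by
    have := Fintype.card_le_of_surjective v hs
    simp at this
  simp only [Function.Surjective, not_forall] at hns
  obtain ⟨i, hi⟩ := hns
  have hx : ∀ a, ∃ s, i.succAbove s = v a := fun a =>
    Fin.exists_succAbove_eq (fun hh => hi ⟨a, hh⟩)
  choose s hs using hx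
  have hsi : Function.Injective s := fun a a' haa => hv (by rw [← hs a, ← hs a', haa])
  let σ : Equiv.Perm (Fin 5) := Equiv.ofBijective s (Finite.injective_iff_bijective.1 hsi)
  have e1 : (fun a => e (v a)) = (i.removeNth e) ∘ σ := by
    ext a; simp [σ, Fin.removeNth, hs]
  rw [e1, AlternatingMap.map_perm, h]
  simp

theorem swap2 {V : Type*} [AddCommGroup V] [Module ℝ V] (w : Form V 2) (x y : V) :
    w ![y, x] = -w ![x, y] := by
  have h := w.map_swap ![x, y] (i := 0) (j := 1) (by decide)
  rw [← h]; congr 1; ext i; fin_cases i <;> rfl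

theorem wedge_w_zero {V : Type*} [AddCommGroup V] [Module ℝ V] [FiniteDimensional ℝ V]
    (hdim : Module.finrank ℝ V = 6) (ψp ψm : Form V 3) (J : V →ₗ[ℝ] V)
    (hJ : ∀ x, J (J x) = -x) (hm : ∀ x y z : V, ψm ![x, y, z] = -ψp ![J x, y, z])
    (w : Form V 2) (hw : ∀ x y : V, w ![J x, J y] = w ![x, y]) : wedge w ψm = 0 := by
  have neg3 : ∀ x y z, ψp ![-x, y, z] = -ψp ![x, y, z] := fun x y z => by
    have := ψp.map_vecCons_smul ![y, z] (-1) x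
    simpa using this
  have neg2 : ∀ x y, w ![-x, y] = -w ![x, y] := fun x y => by
    have := w.map_vecCons_smul ![y] (-1) x
    simpa using this
  have p0 : ∀ x y z, ψp ![J x, y, z] = -ψm ![x, y, z] := fun x y z => by rw [hm]; ring
  have p1 : ∀ x y z, ψp ![x, J y, z] = -ψm ![x, y, z] := fun x y z => by
    rw [swap01, p0, swap01]; ring
  have p2 : ∀ x y z, ψp ![x, y, J z] = -ψm ![x, y, z] := fun x y z => by
    rw [swap12, p1, swap12]; ring
  have m0 : ∀ x y z, ψm ![J x, y, z] = ψp ![x, y, z] := fun x y z => by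
    rw [hm, hJ, neg3]; ring
  have m1 : ∀ x y z, ψm ![x, J y, z] = ψp ![x, y, z] := fun x y z => by
    rw [swap01, m0, swap01]; ring
  have m2 : ∀ x y z, ψm ![x, y, J z] = ψp ![x, y, z] := fun x y z => by
    rw [swap12, m1, swap12]; ring
  have hwb : ∀ x y, w ![J x, y] = -w ![x, J y] := fun x y => by
    rw [← hw x (J y), hJ, swap2 w (-y) (J x), neg2, swap2 w (J x) y]; ring
  obtain ⟨e, x, y, z, he⟩ := exists_adapted hdim J hJ
  obtain ⟨r0, r1, r2, r3, r4, r5⟩ := removeNth_basis ![x, J x, y, J y, z, J z]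
  refine form5_zero e _ fun i => ?_
  rw [he]
  fin_cases i
  · simp only [Fin.zero_eta, r0]
    simp [wedge23, m0, m1, m2, p0, p1, p2, zero01, zero12, zero02, hw, hwb]
  · simp only [Fin.mk_one, r1]
    simp [wedge23, m0, m1, m2, p0, p1, p2, zero01, zero12, zero02, hw, hwb]
  · simp only [Fin.reduceFinMk, r2]
    simp [wedge23, m0, m1, m2, p0, p1, p2, zero01, zero12, zero02, hw, hwb]
  · simp only [Fin.reduceFinMk, r3]
    simp [wedge23, m0, m1, m2, p0, p1, p2, zero01, zero12, zero02, hw, hwb]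
  · simp only [Fin.reduceFinMk, r4]
    simp [wedge23, m0, m1, m2, p0, p1, p2, zero01, zero12, zero02, hw, hwb]
  · simp only [Fin.reduceFinMk, r5]
    simp [wedge23, m0, m1, m2, p0, p1, p2, zero01, zero12, zero02, hw, hwb]

/-- The Leibniz rule for the differential of `α ∧ β`, in the case `α ∧ β = 0`. -/
theorem leibniz23 {𝔤 : Type*} [LieRing 𝔤] [LieAlgebra ℝ 𝔤] (α : Form 𝔤 2) (β : Form 𝔤 3)
    (h : wedge α β = 0) (x0 x1 x2 x3 x4 x5 : 𝔤) :
    (d2 α x0 x1 x2 * β ![x3, x4, x5]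
      - d2 α x0 x1 x3 * β ![x2, x4, x5]
      + d2 α x0 x1 x4 * β ![x2, x3, x5]
      - d2 α x0 x1 x5 * β ![x2, x3, x4]
      + d2 α x0 x2 x3 * β ![x1, x4, x5]
      - d2 α x0 x2 x4 * β ![x1, x3, x5]
      + d2 α x0 x2 x5 * β ![x1, x3, x4]
      + d2 α x0 x3 x4 * β ![x1, x2, x5]
      - d2 α x0 x3 x5 * β ![x1, x2, x4]
      + d2 α x0 x4 x5 * β ![x1, x2, x3]
      - d2 α x1 x2 x3 * β ![x0, x4, x5]
      + d2 α x1 x2 x4 * β ![x0, x3, x5]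
      - d2 α x1 x2 x5 * β ![x0, x3, x4]
      - d2 α x1 x3 x4 * β ![x0, x2, x5]
      + d2 α x1 x3 x5 * β ![x0, x2, x4]
      - d2 α x1 x4 x5 * β ![x0, x2, x3]
      + d2 α x2 x3 x4 * β ![x0, x1, x5]
      - d2 α x2 x3 x5 * β ![x0, x1, x4]
      + d2 α x2 x4 x5 * β ![x0, x1, x3]
      - d2 α x3 x4 x5 * β ![x0, x1, x2])
      + (α ![x0, x1] * d3 β x2 x3 x4 x5
      - α ![x0, x2] * d3 β x1 x3 x4 x5
      + α ![x0, x3] * d3 β x1 x2 x4 x5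
      - α ![x0, x4] * d3 β x1 x2 x3 x5
      + α ![x0, x5] * d3 β x1 x2 x3 x4
      + α ![x1, x2] * d3 β x0 x3 x4 x5
      - α ![x1, x3] * d3 β x0 x2 x4 x5
      + α ![x1, x4] * d3 β x0 x2 x3 x5
      - α ![x1, x5] * d3 β x0 x2 x3 x4
      + α ![x2, x3] * d3 β x0 x1 x4 x5
      - α ![x2, x4] * d3 β x0 x1 x3 x5
      + α ![x2, x5] * d3 β x0 x1 x3 x4
      + α ![x3, x4] * d3 β x0 x1 x2 x5
      - α ![x3, x5] * d3 β x0 x1 x2 x4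
      + α ![x4, x5] * d3 β x0 x1 x2 x3) = 0 := by
  have H : ∀ u a b c d : 𝔤, _ = (0 : ℝ) := fun u a b c d =>
    (wedge23 α β u a b c d).symm.trans (by rw [h]; rfl)
  simp only [d2, d3]
  linear_combination -H ⁅x0, x1⁆ x2 x3 x4 x5
      + H ⁅x0, x2⁆ x1 x3 x4 x5
      - H ⁅x0, x3⁆ x1 x2 x4 x5
      + H ⁅x0, x4⁆ x1 x2 x3 x5
      - H ⁅x0, x5⁆ x1 x2 x3 x4
      - H ⁅x1, x2⁆ x0 x3 x4 x5
      + H ⁅x1, x3⁆ x0 x2 x4 x5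
      - H ⁅x1, x4⁆ x0 x2 x3 x5
      + H ⁅x1, x5⁆ x0 x2 x3 x4
      - H ⁅x2, x3⁆ x0 x1 x4 x5
      + H ⁅x2, x4⁆ x0 x1 x3 x5
      - H ⁅x2, x5⁆ x0 x1 x3 x4
      - H ⁅x3, x4⁆ x0 x1 x2 x5
      + H ⁅x3, x5⁆ x0 x1 x2 x4
      - H ⁅x4, x5⁆ x0 x1 x2 x3

set_option maxRecDepth 20000 in
theorem final_eval {𝔤 : Type*} [LieRing 𝔤] [LieAlgebra ℝ 𝔤]
    (ω : Form 𝔤 2) (ψp ψm : Form 𝔤 3) (c : ℝ)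
    (w₂ : Form 𝔤 2) (k : ℝ) (hz : wedge w₂ ψm = 0)
    (hn : wedge ψp ψm = (2 / 3 : ℝ) • wedge (wedge ω ω) ω)
    (hp : wedge (wedge w₂ ω) ω = 0)
    (hd : ∀ x y z w : 𝔤, d3 ψm x y z w
      = -(2 / 3 : ℝ) * c * wedge ω ω ![x, y, z, w] - wedge w₂ ω ![x, y, z, w])
    (hdw₂ : ∀ x y z : 𝔤, d2 w₂ x y z = k * ψp ![x, y, z]) (x0 x1 x2 x3 x4 x5 : 𝔤) :
    wedge (wedge w₂ w₂) ω ![x0, x1, x2, x3, x4, x5] =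
      (2 / 3 : ℝ) * k * wedge (wedge ω ω) ω ![x0, x1, x2, x3, x4, x5] := by
  have L := leibniz23 w₂ ψm hz x0 x1 x2 x3 x4 x5
  have T1 : wedge ψp ψm ![x0, x1, x2, x3, x4, x5] =
      (2 / 3 : ℝ) * wedge (wedge ω ω) ω ![x0, x1, x2, x3, x4, x5] := by rw [hn]; rfl
  have T2 : wedge (wedge w₂ ω) ω ![x0, x1, x2, x3, x4, x5] = 0 := by rw [hp]; rfl
  generalize wedge (wedge ω ω) ω ![x0, x1, x2, x3, x4, x5] = W at *
  simp only [hd, hdw₂, wedge22] at L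
  simp only [wedge42, wedge22] at T2 ⊢
  simp only [wedge33] at T1
  linear_combination -L + k * T1 - (2 / 3) * c * T2

/-- Two 6-forms that are proportional on all explicit tuples are proportional. -/
theorem form6_ext {V : Type*} [AddCommGroup V] [Module ℝ V] (α β : Form V 6) (r : ℝ)
    (h : ∀ x0 x1 x2 x3 x4 x5 : V,
      α ![x0, x1, x2, x3, x4, x5] = r * β ![x0, x1, x2, x3, x4, x5]) : α = r • β := by
  refine AlternatingMap.ext fun v => ?_
  have hv : v = ![v 0, v 1, v 2, v 3, v 4, v 5] := by
    funext i
    fin_cases i <;> rfl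
  rw [hv, AlternatingMap.smul_apply, smul_eq_mul]
  exact h _ _ _ _ _ _

set_option maxRecDepth 50000 in
/-- Let `(ω, ψ₊)` be a coupled SU(3)-structure on a 6-dimensional real
Lie algebra `𝔤` with coupled constant `c` and torsion form `w₂`. If `d w₂ = k ψ₊` for some
`k ∈ ℝ`, then `w₂ ∧ w₂ ∧ ω = (2/3) k ω³`; equivalently `w₂ ∧ w₂ ∧ ω = 4k Ω` with
`Ω = (1/6) ω³`. -/
theorem statement6 {𝔤 : Type*} [LieRing 𝔤] [LieAlgebra ℝ 𝔤] [FiniteDimensional ℝ 𝔤]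
    (hdim : Module.finrank ℝ 𝔤 = 6)
    (ω : Form 𝔤 2) (ψp ψm : Form 𝔤 3) (J : 𝔤 →ₗ[ℝ] 𝔤) (c : ℝ)
    (hcoupled : IsCoupledSU3 ω ψp ψm J c)
    (w₂ : Form 𝔤 2) (hw₂ : IsTorsionForm ω ψp ψm J c w₂)
    (k : ℝ) (hdw₂ : ∀ x y z : 𝔤, d2 w₂ x y z = k * ψp ![x, y, z]) :
    wedge (wedge w₂ w₂) ω = ((2 / 3 : ℝ) * k) • wedge (wedge ω ω) ω ∧
    wedge (wedge w₂ w₂) ω = (4 * k) • ((1 / 6 : ℝ) • wedge (wedge ω ω) ω) := by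
  have hS := hcoupled.toIsSU3
  have hJ := J_sq hdim ω ψp J hS.vol_ne hS.hJ
  have hz := wedge_w_zero hdim ψp ψm J hJ hS.hψm w₂ hw₂.type11
  have main : wedge (wedge w₂ w₂) ω = ((2 / 3 : ℝ) * k) • wedge (wedge ω ω) ω :=
    form6_ext _ _ _ (final_eval ω ψp ψm c w₂ k hz hS.normalized hw₂.primitive hw₂.dψm hdw₂)
  refine ⟨main, ?_⟩
  have hk : (2 / 3 : ℝ) * k = 4 * k * (1 / 6) := by ring
  rw [main, smul_smul, hk]
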